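/- For every v = (x_1, …, x_n) ∈ ([−1,1]∖{0})^n, the set K_v of canonical index pairs admits a good partition: there is a partition η_v of K_v such that every block p ∈ η_v is of one of the following five types: (1) p = {(i,j)} a singleton with s(i,j) = +1; (2) p = {(i,j), (i',j')} with s(i,j) = +1, s(i',j') = −1, and either (i' ≤ i and j = j') or (i' = i and j ≤ j'); (3) p = {(i,j), (i−l,j), (i,j+l'), (i−l,j+l')} with l, l' ≥ 1, s(i,j) = s(i−l,j+l') = +1 and s(i−l,j) = s(i,j+l') = −1; (4) p = {(i,j)} a singleton with s(i,j) = −1; (5) p = {(i,j), (i+l,j), (i,j−l')} with l, l' ≥ 1, s(i,j) = +1 and s(i+l,j) = s(i,j−l') = −1. Moreover, the number of blocks of types (4) or (5) equals min(α+1, β), where α and β are respectively the number of indices i ∈ {1, …, n} for which the partial product ∏_{k=1}^{i} x_k is positive, respectively negative. -/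

import Mathlib

open Finset

/-- The product sign `s(i,j) = ∏_{k=i}^{j} sign(x_k)`. -/
noncomputable def psign (x : ℕ → ℝ) (i j : ℕ) : ℝ :=
  ∏ k ∈ Finset.Icc i j, Real.sign (x k)

open Classical in
/-- The set `K_v` of canonical index pairs: `s(i,j) = (-1)^(i+j+1)`. -/
noncomputable def Kv (n : ℕ) (x : ℕ → ℝ) : Finset (ℕ × ℕ) :=
  (Finset.Icc 1 n ×ˢ Finset.Icc 1 n).filter
    (fun q => q.1 ≤ q.2 ∧ psign x q.1 q.2 = (-1 : ℝ) ^ (q.1 + q.2 + 1))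

/-- Type (1): a singleton `{(i,j)}` with `s(i,j) = +1`. -/
def IsType1 (x : ℕ → ℝ) (p : Finset (ℕ × ℕ)) : Prop :=
  ∃ i j : ℕ, p = {(i, j)} ∧ psign x i j = 1

/-- Type (2): `{(i,j), (i',j')}` with `s(i,j) = +1`, `s(i',j') = -1`, and
`(i' ≤ i ∧ j = j')` or `(i' = i ∧ j ≤ j')`. -/
def IsType2 (x : ℕ → ℝ) (p : Finset (ℕ × ℕ)) : Prop :=
  ∃ i j i' j' : ℕ, p = {(i, j), (i', j')} ∧
    psign x i j = 1 ∧ psign x i' j' = -1 ∧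
    ((i' ≤ i ∧ j = j') ∨ (i' = i ∧ j ≤ j'))

/-- Type (3): `{(i,j), (i-l,j), (i,j+l'), (i-l,j+l')}` with `l, l' ≥ 1`,
`s(i,j) = s(i-l,j+l') = +1` and `s(i-l,j) = s(i,j+l') = -1`. -/
def IsType3 (x : ℕ → ℝ) (p : Finset (ℕ × ℕ)) : Prop :=
  ∃ i j l l' : ℕ, 1 ≤ l ∧ 1 ≤ l' ∧
    p = {(i, j), (i - l, j), (i, j + l'), (i - l, j + l')} ∧
    psign x i j = 1 ∧ psign x (i - l) (j + l') = 1 ∧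
    psign x (i - l) j = -1 ∧ psign x i (j + l') = -1

/-- Type (4): a singleton `{(i,j)}` with `s(i,j) = -1`. -/
def IsType4 (x : ℕ → ℝ) (p : Finset (ℕ × ℕ)) : Prop :=
  ∃ i j : ℕ, p = {(i, j)} ∧ psign x i j = -1

/-- Type (5): `{(i,j), (i+l,j), (i,j-l')}` with `l, l' ≥ 1`, `s(i,j) = +1`
and `s(i+l,j) = s(i,j-l') = -1`. -/
def IsType5 (x : ℕ → ℝ) (p : Finset (ℕ × ℕ)) : Prop :=
  ∃ i j l l' : ℕ, 1 ≤ l ∧ 1 ≤ l' ∧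
    p = {(i, j), (i + l, j), (i, j - l')} ∧
    psign x i j = 1 ∧ psign x (i + l) j = -1 ∧ psign x i (j - l') = -1


inductive GPart (c : ℕ → Bool) : Finset (ℕ × ℕ) → ℕ → Prop
  | nil : GPart c ∅ 0
  | t1 (a b : ℕ) : c a = c b → GPart c {(a, b)} 0
  | t2l (a' a b : ℕ) : a' < a → c a = c b → c a' ≠ c b → GPart c {(a, b), (a', b)} 0
  | t2r (a b b' : ℕ) : b < b' → c a = c b → c a ≠ c b' → GPart c {(a, b), (a, b')} 0
  | t3 (p q r s : ℕ) : p < q → r < s → c q = c r → c p = c s → c p ≠ c q →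
      GPart c {(q, r), (p, r), (q, s), (p, s)} 0
  | t4 (a b : ℕ) : c a ≠ c b → GPart c {(a, b)} 1
  | t5 (p q r : ℕ) : p < q → q < r → c p = c r → c p ≠ c q →
      GPart c {(p, r), (q, r), (p, q)} 1
  | union (P Q : Finset (ℕ × ℕ)) (k l : ℕ) : GPart c P k → GPart c Q l → Disjoint P Q →
      GPart c (P ∪ Q) (k + l)

def gg (o : ℕ → Bool) (r : ℕ) : ℤ := if o r then 1 else -1

/-- balanced: every prefix has at least `-m` surplus of openers. -/
def Bal (R : Finset ℕ) (o : ℕ → Bool) (key : ℕ → ℤ) (m : ℤ) : Prop :=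
  ∀ t : ℤ, -m ≤ ∑ r ∈ R, if key r ≤ t then gg o r else 0

theorem greedy (c : ℕ → Bool) (o : ℕ → Bool) (key : ℕ → ℤ) (W : ℕ → Finset (ℕ × ℕ)) :
    ∀ (N : ℕ) (R : Finset ℕ), R.card ≤ N → Bal R o key 0 →
    (∀ r ∈ R, ∀ r' ∈ R, r ≠ r' → Disjoint (W r) (W r')) →
    (∀ r ∈ R, o r = true → GPart c (W r) 0) →
    (∀ r ∈ R, ∀ r' ∈ R, o r = true → o r' = false → key r ≤ key r' → GPart c (W r ∪ W r') 0) →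
    GPart c (R.biUnion W) 0 := by
  intro N
  induction N with
  | zero =>
    intro R hR _ _ _ _
    have : R = ∅ := by simpa using hR
    subst this
    simpa using GPart.nil
  | succ N ih =>
    intro R hR hb hd ho hm
    by_cases hc : ∃ r ∈ R, o r = false
    · have hne : (R.filter (fun r => o r = false)).Nonempty := by
        obtain ⟨r, hr, hr'⟩ := hc
        exact ⟨r, by simp [hr, hr']⟩
      obtain ⟨r', hr', hmin⟩ := Finset.exists_min_image _ key hne
      simp only [Finset.mem_filter, and_imp] at hr' hmin
      obtain ⟨r, hr, hro, hk⟩ : ∃ r ∈ R, o r = true ∧ key r ≤ key r' := by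
        by_contra hcon
        push Not at hcon
        have h1 := hb (key r')
        have h2 : (∑ r ∈ R, if key r ≤ key r' then gg o r else 0) < ∑ r ∈ R, (0:ℤ) := by
          apply Finset.sum_lt_sum
          · intro i hi
            split_ifs with h
            · have : o i = false := by
                by_contra h3
                have := hcon i hi (by simpa using h3)
                omega
              simp [gg, this]
            · exact le_rfl
          · exact ⟨r', hr'.1, by simp [gg, hr'.2]⟩
        simp at h2 h1
        omega
      have hrr : r ≠ r' := by rintro rfl; simp [hro] at hr'
      have hre : r ∈ R.erase r' := by simp [hrr, hr]
      have key1 : GPart c (((R.erase r').erase r).biUnion W) 0 := by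
        have hsub : ∀ a, a ∈ (R.erase r').erase r → a ∈ R := by
          intro a ha; simp at ha; exact ha.2.2
        apply ih
        · rw [Finset.card_erase_of_mem hre, Finset.card_erase_of_mem hr'.1]; omega
        · intro t
          by_cases ht : key r' ≤ t
          · have h1 := hb t
            rw [← Finset.add_sum_erase _ _ hr'.1, ← Finset.add_sum_erase _ _ hre] at h1
            rw [if_pos ht, if_pos (by omega)] at h1
            simp only [gg, hro, hr'.2] at h1 ⊢
            simp at h1 ⊢
            omega
          · simp only [neg_zero]
            apply Finset.sum_nonneg
            intro i hi
            split_ifs with h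
            · have : o i = true := by
                by_contra h3
                have := hmin i (hsub i hi) (by simpa using h3)
                omega
              simp [gg, this]
            · exact le_rfl
        · exact fun a ha b hb => hd a (hsub a ha) b (hsub b hb)
        · exact fun a ha => ho a (hsub a ha)
        · exact fun a ha b hb => hm a (hsub a ha) b (hsub b hb)
      have key2 := GPart.union _ _ _ _ (hm r hr r' hr'.1 hro hr'.2 hk) key1 (by
        rw [Finset.disjoint_biUnion_right]
        intro a ha
        simp at ha
        rw [Finset.disjoint_union_left]
        exact ⟨hd r hr a ha.2.2 (Ne.symm ha.1), hd r' hr'.1 a ha.2.2 (Ne.symm ha.2.1)⟩)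
      convert key2 using 1
      rw [Finset.union_assoc, Finset.union_left_comm, ← Finset.biUnion_insert, Finset.insert_erase hre,
        ← Finset.biUnion_insert, Finset.insert_erase hr'.1]
    · push Not at hc
      rcases R.eq_empty_or_nonempty with rfl | ⟨r, hr⟩
      · simpa using GPart.nil
      · have hsub : ∀ a, a ∈ R.erase r → a ∈ R := by
          intro a ha; simp at ha; exact ha.2
        have key1 : GPart c ((R.erase r).biUnion W) 0 := by
          apply ih
          · rw [Finset.card_erase_of_mem hr]; omega
          · intro t
            simp only [neg_zero]
            apply Finset.sum_nonneg
            intro i hi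
            have := hc i (hsub i hi)
            simp at this
            split_ifs <;> simp [gg, this]
          · exact fun a ha b hb => hd a (hsub a ha) b (hsub b hb)
          · exact fun a ha => ho a (hsub a ha)
          · exact fun a ha b hb => hm a (hsub a ha) b (hsub b hb)
        have key2 := GPart.union _ _ _ _ (ho r hr (by simpa using hc r hr)) key1 (by
          rw [Finset.disjoint_biUnion_right]
          intro a ha
          simp at ha
          exact hd r hr a ha.2 (Ne.symm ha.1))
        convert key2 using 1
        rw [← Finset.biUnion_insert, Finset.insert_erase hr]

theorem extract (R : Finset ℕ) (o : ℕ → Bool) (key : ℕ → ℤ) (h : Bal R o key 1) :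
    Bal R o key 0 ∨ ∃ r ∈ R, o r = false ∧ Bal (R.erase r) o key 0 := by
  by_cases hb : Bal R o key 0
  · exact Or.inl hb
  right
  let F : ℤ → ℤ := fun t => ∑ r ∈ R, if key r ≤ t then gg o r else 0
  -- a violation at t yields a violating closer
  have hv : ∀ t, F t < 0 → ∃ r ∈ R, o r = false ∧ F (key r) < 0 ∧ key r ≤ t := by
    intro t ht
    have hne : (R.filter (fun r => o r = false ∧ key r ≤ t)).Nonempty := by
      by_contra hcon
      rw [Finset.not_nonempty_iff_eq_empty, Finset.filter_eq_empty_iff] at hcon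
      have : 0 ≤ F t := by
        apply Finset.sum_nonneg
        intro i hi
        have := hcon hi
        split_ifs with h
        · simp [h] at this; simp [gg, this]
        · exact le_rfl
      omega
    obtain ⟨r, hr, hmax⟩ := Finset.exists_max_image _ key hne
    simp only [Finset.mem_filter, and_imp] at hr hmax
    refine ⟨r, hr.1, hr.2.1, lt_of_le_of_lt ?_ ht, hr.2.2⟩
    apply Finset.sum_le_sum
    intro i hi
    have := hmax i hi
    by_cases hoi : o i = true
    · simp only [gg, hoi]
      split_ifs <;> simp <;> omega
    · have hoi : o i = false := by simpa using hoi
      have := this hoi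
      simp only [gg, hoi]
      split_ifs <;> simp <;> omega
  obtain ⟨t, ht⟩ : ∃ t, F t < 0 := by
    unfold Bal at hb; push Not at hb; simpa using hb
  have hne : (R.filter (fun r => o r = false ∧ F (key r) < 0)).Nonempty := by
    obtain ⟨r, h1, h2, h3, _⟩ := hv t ht
    exact ⟨r, by simp [h1, h2, h3]⟩
  obtain ⟨r, hr, hmin⟩ := Finset.exists_min_image _ key hne
  simp only [Finset.mem_filter, and_imp] at hr hmin
  refine ⟨r, hr.1, hr.2.1, fun s => ?_⟩
  have e := Finset.add_sum_erase R (fun r => if key r ≤ s then gg o r else 0) hr.1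
  have h1 := h s
  rw [← e] at h1
  by_cases hs : key r ≤ s
  · simp only [if_pos hs, gg, hr.2.1] at h1 ⊢
    simp at h1 ⊢
    omega
  · have : 0 ≤ F s := by
      by_contra hcon
      obtain ⟨r1, a1, a2, a3, a4⟩ := hv s (by omega)
      have := hmin r1 a1 a2 a3
      omega
    simp only [F, ← e, if_neg hs] at this
    simpa using this

theorem psign_eq (n : ℕ) (x : ℕ → ℝ) (hx : ∀ i ∈ Finset.Icc 1 n, x i ≠ 0) (a b : ℕ) (hab : a ≤ b) (hb : b ≤ n) :
    psign x (a+1) b = Real.sign (∏ k ∈ Finset.Icc 1 a, x k) * Real.sign (∏ k ∈ Finset.Icc 1 b, x k) := by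
  have hs : ∀ u v : ℝ, Real.sign (u * v) = Real.sign u * Real.sign v := by
    intro u v
    rcases lt_trichotomy u 0 with hu | hu | hu <;> rcases lt_trichotomy v 0 with hv | hv | hv <;>
    simp [hu, hv, Real.sign_of_neg, Real.sign_of_pos, mul_pos_of_neg_of_neg, mul_neg_of_neg_of_pos, mul_neg_of_pos_of_neg]
  induction b, hab using Nat.le_induction with
  | base =>
    have h0 : (∏ k ∈ Finset.Icc 1 a, x k) ≠ 0 := by
      rw [Finset.prod_ne_zero_iff]; intro i hi; apply hx; simp at hi ⊢; omega
    rw [← hs]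
    rw [Real.sign_of_pos (mul_self_pos.mpr h0)]
    simp [psign]
  | succ b hab ih =>
    have := ih (by omega)
    unfold psign at this ⊢
    rw [Finset.prod_Icc_succ_top (by omega), this, Finset.prod_Icc_succ_top (by omega), hs]
    ring

theorem psign_col (n : ℕ) (x : ℕ → ℝ) (hx : ∀ i ∈ Finset.Icc 1 n, x i ≠ 0) (c : ℕ → Bool)
    (hc : (∀ a, c a = true ↔ 0 < ∏ k ∈ Finset.Icc 1 a, x k) ∨ (∀ a, c a = false ↔ 0 < ∏ k ∈ Finset.Icc 1 a, x k))
    (a b : ℕ) (hab : a ≤ b) (hb : b ≤ n) :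
    psign x (a+1) b = if c a = c b then 1 else -1 := by
  rw [psign_eq n x hx a b hab hb]
  have h0 : ∀ a ≤ n, (∏ k ∈ Finset.Icc 1 a, x k) ≠ 0 := by
    intro a ha
    rw [Finset.prod_ne_zero_iff]; intro i hi; apply hx; simp at hi ⊢; omega
  have ha0 := h0 a (by omega)
  have hb0 := h0 b (by omega)
  rcases lt_or_gt_of_ne ha0 with h1 | h1 <;> rcases lt_or_gt_of_ne hb0 with h2 | h2 <;>
  rcases hc with hc | hc <;> have e1 := hc a <;> have e2 := hc b <;>
  simp [h1, h2, not_lt.mpr h1.le, not_lt.mpr h2.le] at e1 e2 <;>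
  simp [Real.sign_of_pos, Real.sign_of_neg, h1, h2, e1, e2]

theorem type4_card {x p} (h : IsType4 x p) : p.card = 1 := by
  obtain ⟨i, j, rfl, _⟩ := h; simp

theorem type5_card {x p} (h : IsType5 x p) : p.card = 3 := by
  obtain ⟨i, j, l, l', hl, hl', rfl, h1, h2, h3⟩ := h
  have : j - l' ≠ j := by
    intro h; rw [h] at h3; linarith
  rw [Finset.card_eq_three]
  refine ⟨_, _, _, ?_, ?_, ?_, rfl⟩ <;> simp [Prod.ext_iff] <;> omega

open Classical in
def Concl (x : ℕ → ℝ) (P : Finset (ℕ × ℕ)) (m : ℕ) : Prop :=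
    ∃ η : Finset (Finset (ℕ × ℕ)),
      (∀ p ∈ η, p.Nonempty) ∧
      (η : Set (Finset (ℕ × ℕ))).PairwiseDisjoint id ∧
      η.biUnion id = P ∧
      (∀ p ∈ η, IsType1 x p ∨ IsType2 x p ∨ IsType3 x p ∨ IsType4 x p ∨ IsType5 x p) ∧
      (η.filter (fun p => IsType4 x p ∨ IsType5 x p)).card = m

theorem Concl.good {x p} (hn : p.Nonempty) (h : IsType1 x p ∨ IsType2 x p ∨ IsType3 x p)
    (h4 : ¬ IsType4 x p) (h5 : p.card ≠ 3) : Concl x p 0 := by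
  classical
  refine ⟨{p}, by simpa using hn, by simp, by simp, by simp; tauto, ?_⟩
  rw [Finset.card_eq_zero, Finset.filter_eq_empty_iff]
  rintro q hq (h' | h')
  · simp at hq; subst hq; exact h4 h'
  · simp at hq; subst hq; exact h5 (type5_card h')

theorem Concl.bad {x p} (hn : p.Nonempty) (h : IsType4 x p ∨ IsType5 x p) : Concl x p 1 := by
  classical
  refine ⟨{p}, by simpa using hn, by simp, by simp, by simp; tauto, ?_⟩
  rw [Finset.filter_true_of_mem]
  · simp
  · simpa using h

theorem Concl.union {x P Q k l} (hP : Concl x P k) (hQ : Concl x Q l) (hd : Disjoint P Q) :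
    Concl x (P ∪ Q) (k + l) := by
  classical
  obtain ⟨η, a1, a2, a3, a4, a5⟩ := hP
  obtain ⟨θ, b1, b2, b3, b4, b5⟩ := hQ
  have hs : ∀ p ∈ η, ∀ q ∈ θ, Disjoint p q := by
    intro p hp q hq
    refine Finset.disjoint_of_subset_left ?_ (Finset.disjoint_of_subset_right ?_ hd)
    · rw [← a3]; exact Finset.subset_biUnion_of_mem id hp
    · rw [← b3]; exact Finset.subset_biUnion_of_mem id hq
  have hd' : Disjoint η θ := by
    rw [Finset.disjoint_left]
    intro p hp hq
    have := hs p hp p hq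
    rw [disjoint_self] at this
    have h2 := a1 p hp
    rw [this] at h2
    simp at h2
  refine ⟨η ∪ θ, ?_, ?_, ?_, ?_, ?_⟩
  · intro p hp; rcases Finset.mem_union.mp hp with h | h; exacts [a1 p h, b1 p h]
  · rw [Finset.coe_union]
    rw [Set.pairwiseDisjoint_union]
    exact ⟨a2, b2, fun p hp q hq _ => hs p hp q hq⟩
  · rw [Finset.union_biUnion, a3, b3]
  · intro p hp; rcases Finset.mem_union.mp hp with h | h; exacts [a4 p h, b4 p h]
  · rw [Finset.filter_union, Finset.card_union_of_disjoint, ← a5, ← b5]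
    exact Finset.disjoint_filter_filter hd'

def ff (q : ℕ × ℕ) : ℕ × ℕ := (q.1 + 1, q.2)

theorem ff_inj : Function.Injective ff := by
  rintro ⟨a, b⟩ ⟨c, d⟩ h; simp [ff] at h ⊢; exact h

theorem GPart.concl {n : ℕ} {x : ℕ → ℝ} {c : ℕ → Bool}
    (hs : ∀ a b, a < b → b ≤ n → psign x (a+1) b = if c a = c b then 1 else -1)
    {P : Finset (ℕ × ℕ)} {k : ℕ} (h : GPart c P k) :
    (∀ a b, (a, b) ∈ P → a < b ∧ b ≤ n) → Concl x (P.image ff) k := by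
  induction h with
  | nil => intro _; exact ⟨∅, by simp, by simp, by simp, by simp, by simp⟩
  | t1 a b h =>
    intro hP
    have := hP a b (by simp)
    have e := hs a b this.1 this.2
    rw [if_pos h] at e
    simp only [Finset.image_singleton, ff]
    refine Concl.good (by simp) (Or.inl ⟨_, _, rfl, e⟩) ?_ (by simp)
    rintro ⟨i, j, h1, h2⟩
    simp at h1
    rw [← h1.1, ← h1.2, e] at h2
    norm_num at h2
  | t2l a' a b h1 h2 h3 =>
    intro hP
    have g1 := hP a b (by simp)
    have g2 := hP a' b (by simp)
    have e := hs a b g1.1 g1.2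
    have e' := hs a' b g2.1 g2.2
    rw [if_pos h2] at e
    rw [if_neg h3] at e'
    simp only [Finset.image_insert, Finset.image_singleton, ff]
    have hc : ({(a + 1, b), (a' + 1, b)} : Finset (ℕ × ℕ)).card = 2 := by
      rw [Finset.card_pair]; simp; omega
    refine Concl.good (by simp) (Or.inr (Or.inl ⟨_, _, _, _, rfl, e, e', by left; omega⟩)) ?_ (by omega)
    intro h; have := type4_card h; omega
  | t2r a b b' h1 h2 h3 =>
    intro hP
    have g1 := hP a b (by simp)
    have g2 := hP a b' (by simp)
    have e := hs a b g1.1 g1.2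
    have e' := hs a b' g2.1 g2.2
    rw [if_pos h2] at e
    rw [if_neg h3] at e'
    simp only [Finset.image_insert, Finset.image_singleton, ff]
    have hc : ({(a + 1, b), (a + 1, b')} : Finset (ℕ × ℕ)).card = 2 := by
      rw [Finset.card_pair]; simp; omega
    refine Concl.good (by simp) (Or.inr (Or.inl ⟨_, _, _, _, rfl, e, e', by right; omega⟩)) ?_ (by omega)
    intro h; have := type4_card h; omega
  | t3 p q r s h1 h2 h3 h4 h5 =>
    intro hP
    have g1 := hP q r (by simp)
    have g2 := hP p r (by simp)
    have g3 := hP q s (by simp)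
    have g4 := hP p s (by simp)
    have e1 := hs q r g1.1 g1.2
    have e2 := hs p r g2.1 g2.2
    have e3 := hs q s g3.1 g3.2
    have e4 := hs p s g4.1 g4.2
    rw [if_pos h3] at e1
    rw [if_neg (h3 ▸ h5)] at e2
    rw [if_neg (by rw [← h4]; exact h5.symm)] at e3
    rw [if_pos h4] at e4
    simp only [Finset.image_insert, Finset.image_singleton, ff]
    have hc : ({(q + 1, r), (p + 1, r), (q + 1, s), (p + 1, s)} : Finset (ℕ × ℕ)).card = 4 := by
      rw [Finset.card_insert_of_notMem, Finset.card_insert_of_notMem, Finset.card_pair] <;> simp <;> omega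
    have k1 : q + 1 - (q - p) = p + 1 := by omega
    have k2 : r + (s - r) = s := by omega
    refine Concl.good (by simp) (Or.inr (Or.inr ⟨q+1, r, q-p, s-r, by omega, by omega, ?_, e1, ?_⟩)) ?_ (by omega)
    · rw [k1, k2]
    · rw [k1, k2]; exact ⟨e4, e2, e3⟩
    intro h; have := type4_card h; omega
  | t4 a b h =>
    intro hP
    have := hP a b (by simp)
    have e := hs a b this.1 this.2
    rw [if_neg h] at e
    simp only [Finset.image_singleton, ff]
    exact Concl.bad (by simp) (Or.inl ⟨_, _, rfl, e⟩)
  | t5 p q r h1 h2 h3 h4 =>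
    intro hP
    have g1 := hP p r (by simp)
    have g2 := hP q r (by simp)
    have g3 := hP p q (by simp)
    have e1 := hs p r g1.1 g1.2
    have e2 := hs q r g2.1 g2.2
    have e3 := hs p q g3.1 g3.2
    rw [if_pos h3] at e1
    rw [if_neg (by rw [← h3]; exact h4.symm)] at e2
    rw [if_neg h4] at e3
    simp only [Finset.image_insert, Finset.image_singleton, ff]
    have k1 : p + 1 + (q - p) = q + 1 := by omega
    have k2 : r - (r - q) = q := by omega
    refine Concl.bad (by simp) (Or.inr ⟨p+1, r, q-p, r-q, by omega, by omega, ?_, e1, ?_⟩)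
    · rw [k1, k2]
    · rw [k1, k2]; exact ⟨e2, e3⟩
  | union P Q k l _ _ hd ih1 ih2 =>
    intro hP
    rw [Finset.image_union]
    refine Concl.union (ih1 fun a b h => hP a b (by simp [h])) (ih2 fun a b h => hP a b (by simp [h])) ?_
    rwa [Finset.disjoint_image ff_inj]

theorem gg_not (c : ℕ → Bool) (a : ℕ) : gg (fun a => !c a) a = - gg c a := by
  cases h : c a <;> simp [gg, h]

def prs (A : Finset ℕ) : Finset (ℕ × ℕ) := (A ×ˢ A).filter (fun q => q.1 < q.2)

theorem mem_prs {A : Finset ℕ} {a b : ℕ} : (a, b) ∈ prs A ↔ a ∈ A ∧ b ∈ A ∧ a < b := by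
  simp [prs, and_assoc]

def hh (c : ℕ → Bool) (A : Finset ℕ) (u : ℕ) : ℤ := ∑ a ∈ A, if a < u then gg c a else 0

theorem hh_succ (c : ℕ → Bool) (A : Finset ℕ) (u : ℕ) :
    hh c A (u + 1) = hh c A u + if u ∈ A then gg c u else 0 := by
  unfold hh
  rw [← Finset.sum_ite_eq' A u (fun a => gg c a), ← Finset.sum_add_distrib]
  apply Finset.sum_congr rfl
  intro a _
  split_ifs <;> omega

theorem hh_congr (c : ℕ → Bool) (A : Finset ℕ) (u v : ℕ) (h : ∀ a ∈ A, a < u ↔ a < v) :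
    hh c A u = hh c A v := by
  unfold hh
  apply Finset.sum_congr rfl
  intro a ha
  simp [h a ha]

theorem hh_top (c : ℕ → Bool) (A : Finset ℕ) (u : ℕ) (h : ∀ a ∈ A, a < u) :
    hh c A u = ∑ a ∈ A, gg c a := by
  unfold hh
  apply Finset.sum_congr rfl
  intro a ha
  simp [h a ha]

theorem hh_bot (c : ℕ → Bool) (A : Finset ℕ) (u : ℕ) (h : ∀ a ∈ A, ¬ a < u) :
    hh c A u = 0 := by
  unfold hh
  apply Finset.sum_eq_zero
  intro a ha
  simp [h a ha]

theorem exists_last_min (c : ℕ → Bool) (A : Finset ℕ) :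
    ∃ t, (∀ u, hh c A t ≤ hh c A u) ∧ ((∀ a ∈ A, a < t) ∨ ∀ u, t < u → hh c A t < hh c A u) := by
  obtain ⟨T, hT⟩ : ∃ T, ∀ a ∈ A, a < T :=
    ⟨A.sup id + 1, fun a ha => Nat.lt_succ_of_le (Finset.le_sup (f := id) ha)⟩
  have hmin : ∀ u, hh c A u = hh c A (min u T) := by
    intro u
    apply hh_congr
    intro a ha
    have := hT a ha
    omega
  obtain ⟨m, hm, hm'⟩ := Finset.exists_min_image (Finset.range (T + 1)) (hh c A) ⟨0, by simp⟩
  obtain ⟨t, ht, ht'⟩ := Finset.exists_max_image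
    ((Finset.range (T + 1)).filter (fun u => hh c A u = hh c A m)) id ⟨m, by simpa using hm⟩
  simp only [Finset.mem_filter, Finset.mem_range, and_imp, id] at ht ht' hm'
  have h1 : ∀ u, hh c A t ≤ hh c A u := by
    intro u
    rw [ht.2, hmin u]
    exact hm' _ (by omega)
  refine ⟨t, h1, ?_⟩
  by_cases htT : t = T
  · left; rw [htT]; exact hT
  · right
    intro u hu
    refine lt_of_le_of_ne (h1 u) ?_
    intro he
    rw [hmin u] at he
    have := ht' (min u T) (by omega) (by rw [← he, ht.2])
    omega

theorem GPart.congr {c P Q k l} (h : GPart c P k) (hP : P = Q) (hk : k = l) : GPart c Q l := by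
  subst hP; subst hk; exact h

theorem core (c : ℕ → Bool) : ∀ (N : ℕ) (A : Finset ℕ), A.card ≤ N → 0 ≤ ∑ a ∈ A, gg c a →
    GPart c (prs A) (A.filter (fun a => c a = false)).card := by
  intro N
  induction N with
  | zero =>
    intro A hA _
    have : A = ∅ := by simpa using hA
    subst this
    exact GPart.nil
  | succ N ih =>
    intro A hA hd
    obtain ⟨t, ht, hlast⟩ := exists_last_min c A
    by_cases hhi : ∀ a ∈ A, a < t
    · -- all nonneg, remove the last
      rcases A.eq_empty_or_nonempty with rfl | hne
      · exact GPart.nil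
      obtain ⟨e, he, hemax⟩ := Finset.exists_max_image A id hne
      simp only [id] at hemax
      have h0 : hh c A 0 = 0 := hh_bot _ _ _ (by simp)
      have hdt := hh_top c A t hhi
      have hd0 : ∑ a ∈ A, gg c a = 0 := by
        have := ht 0; omega
      have hnn : ∀ u, 0 ≤ hh c A u := by
        intro u; have := ht u; omega
      have hs := hh_succ c A e
      rw [if_pos he] at hs
      have he1 : hh c A (e + 1) = 0 := by
        rw [hh_top _ _ _ (fun a ha => Nat.lt_succ_of_le (hemax a ha)), hd0]
      have hce : c e = false := by
        by_contra hcon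
        have := hnn e
        rw [show gg c e = 1 by simp at hcon; simp [gg, hcon]] at hs
        omega
      have hge : gg c e = -1 := by simp [gg, hce]
      have hsum := Finset.add_sum_erase A (gg c) he
      have hb : Bal (A.erase e) (fun a => !c a) (fun a => -(a : ℤ)) 1 := by
        intro s
        have h1 := hnn (-s).toNat
        have h2 : (∑ r ∈ A.erase e, if -(r : ℤ) ≤ s then gg (fun a => !c a) r else 0)
            = ∑ r ∈ A.erase e, ((if r < (-s).toNat then gg c r else 0) - gg c r) := by
          apply Finset.sum_congr rfl
          intro a _
          rw [gg_not]
          try dsimp only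
          split_ifs <;> omega
        rw [h2, Finset.sum_sub_distrib]
        have h3 := Finset.add_sum_erase A (fun r => if r < (-s).toNat then gg c r else 0) he
        unfold hh at h1
        rw [← h3] at h1
        rw [hge] at h1
        split_ifs at h1 <;> omega
      have hR : ∀ a ∈ A.erase e, a ∈ A ∧ a < e := by
        intro a ha
        rw [Finset.mem_erase] at ha
        have := hemax a ha.2
        exact ⟨ha.2, by omega⟩
      have hgr : ∀ R ⊆ A.erase e, Bal R (fun a => !c a) (fun a => -(a : ℤ)) 0 →
          GPart c (R.biUnion (fun r => {(r, e)})) 0 := by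
        intro R hRs hbR
        refine greedy c (fun a => !c a) (fun a => -(a : ℤ)) _ R.card R le_rfl hbR ?_ ?_ ?_
        · intro r _ r' _ hne; simp [hne, hne.symm]
        · intro r _ ho
          exact GPart.t1 _ _ (by simp at ho; simp [ho, hce])
        · intro r _ r' _ ho ho' hk
          simp at ho ho'
          have : r ≠ r' := by rintro rfl; simp [ho] at ho'
          exact GPart.t2l _ _ _ (by omega) (by simp [ho, hce]) (by simp [ho', hce])
      have ihA := ih (A.erase e) (by rw [Finset.card_erase_of_mem he]; omega) (by omega)
      rcases extract _ _ _ hb with hb | ⟨r0, hr0, hor, hb⟩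
      · exfalso
        have h1 := hb 0
        simp only [neg_zero] at h1
        have h2 : (∑ r ∈ A.erase e, if -(r : ℤ) ≤ 0 then gg (fun a => !c a) r else 0)
            = - ∑ r ∈ A.erase e, gg c r := by
          rw [← Finset.sum_neg_distrib]
          apply Finset.sum_congr rfl
          intro a _
          rw [gg_not, if_pos (by omega)]
        omega
      · have k1 := hgr _ (Finset.erase_subset _ _) hb
        have k2 : GPart c {(r0, e)} 1 := GPart.t4 _ _ (by simp at hor; simp [hor, hce])
        have k3 := GPart.union _ _ _ _ k1 k2 (by
          rw [Finset.disjoint_left]; rintro ⟨a, b⟩; simp; grind)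
        have k4 := GPart.union _ _ _ _ ihA k3 (by
          rw [Finset.disjoint_left]; rintro ⟨a, b⟩; simp [mem_prs]; grind)
        refine k4.congr ?_ ?_
        · ext ⟨a, b⟩
          simp [mem_prs]
          grind
        · rw [Finset.filter_erase, Finset.card_erase_of_mem (by simp [he, hce])]
          have : 0 < (A.filter (fun a => c a = false)).card :=
            Finset.card_pos.mpr ⟨e, by simp [he, hce]⟩
          omega
    · have hlt : ∀ u, t < u → hh c A t < hh c A u := hlast.resolve_left hhi
      have hst := hh_succ c A t
      have htt := hlt (t + 1) (by omega)
      have htA : t ∈ A := by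
        by_contra hcon
        rw [if_neg hcon] at hst
        omega
      rw [if_pos htA] at hst
      have hct : c t = true := by
        by_contra hcon
        rw [show gg c t = -1 by simp [gg, hcon]] at hst
        omega
      have hgt : gg c t = 1 := by simp [gg, hct]
      have hbR : Bal (A.filter (fun a => t < a)) c (fun a => (a : ℤ)) 0 := by
        intro s
        have h1 : 0 ≤ hh c A (max (t + 1) (s + 1).toNat) - hh c A (t + 1) := by
          have := hlt (max (t + 1) (s + 1).toNat) (by omega)
          omega
        unfold hh at h1
        rw [← Finset.sum_sub_distrib] at h1
        rw [Finset.sum_filter]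
        rw [neg_zero]
        refine le_of_le_of_eq h1 ?_
        apply Finset.sum_congr rfl
        intro a _
        dsimp only
        split_ifs <;> omega
      by_cases hlo : ∃ a ∈ A, a < t
      · -- chord
        obtain ⟨p, hp, hpmax⟩ := Finset.exists_max_image (A.filter (fun a => a < t)) id
          (by obtain ⟨a, h1, h2⟩ := hlo; exact ⟨a, by simp [h1, h2]⟩)
        simp only [Finset.mem_filter, and_imp, id] at hp hpmax
        have hadj : hh c A (p + 1) = hh c A t := by
          apply hh_congr
          intro a ha
          have := hpmax a ha
          omega
        have hsp := hh_succ c A p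
        rw [if_pos hp.1] at hsp
        have hcp : c p = false := by
          by_contra hcon
          have := ht p
          rw [show gg c p = 1 by simp at hcon; simp [gg, hcon]] at hsp
          omega
        have hgp : gg c p = -1 := by simp [gg, hcp]
        have hbL : Bal (A.filter (fun a => a < p)) (fun a => !c a) (fun a => -(a : ℤ)) 1 := by
          intro s
          have h1 : -1 ≤ hh c A (min p (-s).toNat) - hh c A p := by
            have := ht (min p (-s).toNat)
            omega
          unfold hh at h1
          rw [← Finset.sum_sub_distrib] at h1
          rw [Finset.sum_filter]
          refine le_of_le_of_eq h1 ?_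
          apply Finset.sum_congr rfl
          intro a _
          rw [gg_not]
          try dsimp only
          split_ifs <;> omega
        have kR : GPart c ((A.filter (fun a => t < a)).biUnion (fun r => {(t, r), (p, r)})) 0 := by
          refine greedy c c (fun a => (a : ℤ)) _ _ _ le_rfl hbR ?_ ?_ ?_
          · intro r _ r' _ hne; simp [hne, hne.symm]
          · intro r _ ho
            exact GPart.t2l _ _ _ hp.2 (by simp [ho, hct]) (by simp [ho, hcp])
          · intro r _ r' _ ho ho' hk
            have : r ≠ r' := by rintro rfl; simp [ho] at ho'
            refine (GPart.t3 p t r r' hp.2 (by omega) (by simp [ho, hct]) (by simp [ho', hcp])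
              (by simp [hcp, hct])).congr ?_ rfl
            ext ⟨a, b⟩; simp; tauto
        have hgr : ∀ R ⊆ A.filter (fun a => a < p), Bal R (fun a => !c a) (fun a => -(a : ℤ)) 0 →
            GPart c (R.biUnion (fun r => {(r, p), (r, t)})) 0 := by
          intro R hRs hbR
          refine greedy c (fun a => !c a) (fun a => -(a : ℤ)) _ R.card R le_rfl hbR ?_ ?_ ?_
          · intro r _ r' _ hne; simp [hne, hne.symm]
          · intro r _ ho
            simp at ho
            exact GPart.t2r _ _ _ hp.2 (by simp [ho, hcp]) (by simp [ho, hct])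
          · intro r _ r' _ ho ho' hk
            simp at ho ho'
            have : r ≠ r' := by rintro rfl; simp [ho] at ho'
            refine (GPart.t3 r' r p t (by omega) hp.2 (by simp [ho, hcp]) (by simp [ho', hct])
              (by simp [ho, ho'])).congr ?_ rfl
            ext ⟨a, b⟩; simp; tauto
        have kL : GPart c ((A.filter (fun a => a < p)).biUnion (fun r => {(r, p), (r, t)}) ∪ {(p, t)}) 1 := by
          rcases extract _ _ _ hbL with hb | ⟨r0, hr0, hor, hb⟩
          · have k1 := hgr _ (Finset.Subset.refl _) hb
            exact (GPart.union _ _ _ _ k1 (GPart.t4 p t (by simp [hcp, hct])) (by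
              rw [Finset.disjoint_left]; rintro ⟨a, b⟩; simp; grind)).congr rfl rfl
          · have k1 := hgr _ (Finset.erase_subset _ _) hb
            simp at hor hr0
            refine (GPart.union _ _ _ _ k1 (GPart.t5 r0 p t hr0.2 hp.2 (by simp [hor, hct])
              (by simp [hor, hcp])) (by
              rw [Finset.disjoint_left]; rintro ⟨a, b⟩; simp; grind)).congr ?_ rfl
            ext ⟨a, b⟩
            simp
            grind
        have htp : t ∈ A.erase p := by
          rw [Finset.mem_erase]; exact ⟨by omega, htA⟩
        have s1 := Finset.add_sum_erase A (gg c) hp.1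
        have s2 := Finset.add_sum_erase (A.erase p) (gg c) htp
        have ihA := ih ((A.erase p).erase t) (by
          rw [Finset.card_erase_of_mem htp, Finset.card_erase_of_mem hp.1]; omega) (by omega)
        have k3 := GPart.union _ _ _ _ kL kR (by
          rw [Finset.disjoint_left]; rintro ⟨a, b⟩; simp; grind)
        have k4 := GPart.union _ _ _ _ ihA k3 (by
          rw [Finset.disjoint_left]; rintro ⟨a, b⟩; simp [mem_prs]; grind)
        have hcov : ∀ a ∈ A, a < p ∨ a = p ∨ a = t ∨ t < a := by
          intro a ha
          have := hpmax a ha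
          omega
        have hpt := hp.2
        have hpA := hp.1
        refine k4.congr ?_ ?_
        · ext ⟨a, b⟩
          have h1 := hcov a
          have h2 := hcov b
          simp [mem_prs]
          clear * - h1 h2 hpt hpA htA
          grind
        · rw [Finset.filter_erase, Finset.filter_erase, Finset.erase_eq_of_notMem (a := t) (by simp [hct]),
            Finset.card_erase_of_mem (by simp [hp.1, hcp])]
          have : 0 < (A.filter (fun a => c a = false)).card :=
            Finset.card_pos.mpr ⟨p, by simp [hp.1, hcp]⟩
          omega
      · -- remove the first
        push Not at hlo
        have hAe : A.filter (fun a => t < a) = A.erase t := by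
          ext a
          simp
          constructor
          · intro h; exact ⟨by omega, h.1⟩
          · intro h; have := hlo a h.2; exact ⟨h.2, by omega⟩
        rw [hAe] at hbR
        have k1 : GPart c ((A.erase t).biUnion (fun r => {(t, r)})) 0 := by
          refine greedy c c (fun a => (a : ℤ)) _ _ _ le_rfl hbR ?_ ?_ ?_
          · intro r _ r' _ hne; simp [hne, hne.symm]
          · intro r _ ho
            exact GPart.t1 _ _ (by simp [ho, hct])
          · intro r _ r' _ ho ho' hk
            have : r ≠ r' := by rintro rfl; simp [ho] at ho'
            exact GPart.t2r _ _ _ (by omega) (by simp [ho, hct]) (by simp [ho', hct])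
        have h0 : hh c A t = 0 := hh_bot _ _ _ (by simpa using hlo)
        have hsum := Finset.add_sum_erase A (gg c) htA
        have hpos : 0 < ∑ a ∈ A, gg c a := by
          obtain ⟨T, hT⟩ : ∃ T, ∀ a ∈ A, a < T :=
            ⟨A.sup id + 1, fun a ha => Nat.lt_succ_of_le (Finset.le_sup (f := id) ha)⟩
          rw [← hh_top c A T hT]
          have := hlt T (hT t htA)
          omega
        have ihA := ih (A.erase t) (by rw [Finset.card_erase_of_mem htA]; omega) (by omega)
        have k4 := GPart.union _ _ _ _ ihA k1 (by
          rw [Finset.disjoint_left]; rintro ⟨a, b⟩; simp [mem_prs]; grind)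
        refine k4.congr ?_ ?_
        · ext ⟨a, b⟩
          have h1 := hlo a
          have h2 := hlo b
          simp [mem_prs]
          clear * - h1 h2 htA
          grind
        · rw [Finset.filter_erase, Finset.erase_eq_of_notMem (a := t) (by simp [hct])]
          rfl

theorem sum_gg (c : ℕ → Bool) (A : Finset ℕ) :
    ∑ a ∈ A, gg c a = ((A.filter (fun a => c a = true)).card : ℤ)
      - ((A.filter (fun a => c a = false)).card : ℤ) := by
  simp only [Finset.card_filter]
  push_cast
  rw [← Finset.sum_sub_distrib]
  apply Finset.sum_congr rfl
  intro a _
  cases h : c a <;> simp [gg, h]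

theorem class_concl (n : ℕ) (x : ℕ → ℝ) (c : ℕ → Bool)
    (hs : ∀ a b, a < b → b ≤ n → psign x (a+1) b = if c a = c b then 1 else -1)
    (A : Finset ℕ) (hA : ∀ a ∈ A, a ≤ n) :
    Concl x ((prs A).image ff) (min (A.filter (fun a => c a = true)).card
      (A.filter (fun a => c a = false)).card) := by
  have hP : ∀ a b, (a, b) ∈ prs A → a < b ∧ b ≤ n := by
    intro a b h
    rw [mem_prs] at h
    exact ⟨h.2.2, hA b h.2.1⟩
  have h1 := sum_gg c A
  rcases le_total 0 (∑ a ∈ A, gg c a) with h | h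
  · rw [min_eq_right (by omega)]
    exact (core c _ A le_rfl h).concl hs hP
  · rw [min_eq_left (by omega)]
    have k := core (fun a => !c a) _ A le_rfl (by
      simp only [gg_not, Finset.sum_neg_distrib]; omega)
    have k2 := k.concl (n := n) (x := x) (by
      intro a b hab hb; rw [hs a b hab hb]; simp) hP
    simpa using k2

theorem parity_sum (m : ℕ) : ∑ a ∈ Finset.range m, (if a % 2 = 0 then (1:ℤ) else -1)
    = if m % 2 = 1 then 1 else 0 := by
  induction m with
  | zero => simp
  | succ m ih =>
    rw [Finset.sum_range_succ, ih]
    split_ifs <;> omega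

theorem count_min (c : ℕ → Bool) (cl : ℕ → Bool) (hcl : ∀ a, cl a = (c a == decide (a % 2 = 0))) (m : ℕ) :
    min ((((Finset.range m).filter (fun a => cl a = true))).filter (fun a => c a = true)).card
      ((((Finset.range m).filter (fun a => cl a = true))).filter (fun a => c a = false)).card +
    min ((((Finset.range m).filter (fun a => cl a = false))).filter (fun a => c a = true)).card
      ((((Finset.range m).filter (fun a => cl a = false))).filter (fun a => c a = false)).card
    = min ((Finset.range m).filter (fun a => c a = true)).card
      ((Finset.range m).filter (fun a => c a = false)).card := by
  have h0 := parity_sum m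
  simp only [Finset.filter_filter]
  have e1 : ∀ b : Bool, ((Finset.range m).filter (fun a => c a = b)).card =
      ((Finset.range m).filter (fun a => cl a = true ∧ c a = b)).card +
      ((Finset.range m).filter (fun a => cl a = false ∧ c a = b)).card := by
    intro b
    simp only [Finset.card_filter]
    rw [← Finset.sum_add_distrib]
    apply Finset.sum_congr rfl
    intro a _
    cases cl a <;> simp
  have e2 : (((Finset.range m).filter (fun a => cl a = true ∧ c a = true)).card : ℤ) -
      ((Finset.range m).filter (fun a => cl a = true ∧ c a = false)).card -
      ((Finset.range m).filter (fun a => cl a = false ∧ c a = true)).card +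
      ((Finset.range m).filter (fun a => cl a = false ∧ c a = false)).card
      = if m % 2 = 1 then 1 else 0 := by
    rw [← h0]
    simp only [Finset.card_filter]
    push_cast
    rw [← Finset.sum_sub_distrib, ← Finset.sum_sub_distrib, ← Finset.sum_add_distrib]
    apply Finset.sum_congr rfl
    intro a _
    by_cases h2 : a % 2 = 0 <;> cases h : c a <;> simp [hcl, h, h2]
  have := e1 true
  have := e1 false
  split_ifs at e2 <;> omega

open Classical in
theorem Kv_has_good_partition (n : ℕ) (x : ℕ → ℝ)
    (hx : ∀ i ∈ Finset.Icc 1 n, x i ∈ Set.Icc (-1 : ℝ) 1 ∧ x i ≠ 0) :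
    ∃ η : Finset (Finset (ℕ × ℕ)),
      (∀ p ∈ η, p.Nonempty) ∧
      (η : Set (Finset (ℕ × ℕ))).PairwiseDisjoint id ∧
      η.biUnion id = Kv n x ∧
      (∀ p ∈ η, IsType1 x p ∨ IsType2 x p ∨ IsType3 x p ∨ IsType4 x p ∨ IsType5 x p) ∧
      (η.filter (fun p => IsType4 x p ∨ IsType5 x p)).card =
        min (((Finset.Icc 1 n).filter
            (fun i => 0 < ∏ k ∈ Finset.Icc 1 i, x k)).card + 1)
          (((Finset.Icc 1 n).filter
            (fun i => ∏ k ∈ Finset.Icc 1 i, x k < 0)).card) := by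
  have hx0 : ∀ i ∈ Finset.Icc 1 n, x i ≠ 0 := fun i hi => (hx i hi).2
  let c : ℕ → Bool := fun a => decide (0 < ∏ k ∈ Finset.Icc 1 a, x k)
  let cl : ℕ → Bool := fun a => (c a == decide (a % 2 = 0))
  have hs : ∀ a b, a < b → b ≤ n → psign x (a+1) b = if c a = c b then 1 else -1 :=
    fun a b hab hb => psign_col n x hx0 c (Or.inl (by intro a; simp [c])) a b hab.le hb
  have k1 := class_concl n x c hs ((Finset.range (n+1)).filter (fun a => cl a = true))
    (by intro a ha; simp at ha; omega)
  have k2 := class_concl n x c hs ((Finset.range (n+1)).filter (fun a => cl a = false))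
    (by intro a ha; simp at ha; omega)
  have k3 := k1.union k2 (by
    rw [Finset.disjoint_image ff_inj, Finset.disjoint_left]
    rintro ⟨a, b⟩ h1 h2
    rw [mem_prs] at h1 h2
    have h3 := h1.1
    have h4 := h2.1
    simp only [Finset.mem_filter] at h3 h4
    rw [h3.2] at h4
    simp at h4)
  rw [count_min c cl (fun _ => rfl), ← Finset.image_union] at k3
  have hK : (prs ((Finset.range (n+1)).filter (fun a => cl a = true)) ∪
      prs ((Finset.range (n+1)).filter (fun a => cl a = false))).image ff = Kv n x := by
    have hiff : ∀ a b, a < b → b ≤ n →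
        (psign x (a+1) b = (-1 : ℝ) ^ (a + 1 + b + 1) ↔ cl a = cl b) := by
      intro a b hab hb
      rw [hs a b hab hb]
      have hpow : (-1 : ℝ) ^ (a + 1 + b + 1) = if (a % 2 = b % 2) then 1 else -1 := by
        split_ifs with h
        · exact Even.neg_one_pow (by rw [Nat.even_iff]; omega)
        · exact Odd.neg_one_pow (by rw [Nat.odd_iff]; omega)
      rw [hpow]
      simp only [cl]
      rcases Nat.mod_two_eq_zero_or_one a with h1 | h1 <;>
      rcases Nat.mod_two_eq_zero_or_one b with h2 | h2 <;>
      cases c a <;> cases c b <;> simp [h1, h2] <;> norm_num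
    ext ⟨i, j⟩
    simp only [Finset.mem_image, Finset.mem_union, Prod.exists, mem_prs, Kv, Finset.mem_filter,
      Finset.mem_product, Finset.mem_Icc, Finset.mem_range, ff, Prod.mk.injEq]
    constructor
    · rintro ⟨a, b, h, rfl, rfl⟩
      have hab : a < b ∧ b ≤ n := by omega
      refine ⟨by omega, by omega, (hiff a b hab.1 hab.2).mpr ?_⟩
      rcases h with h | h
      · rw [h.1.2, h.2.1.2]
      · rw [h.1.2, h.2.1.2]
    · rintro ⟨h1, h2, h3⟩
      obtain ⟨a, rfl⟩ : ∃ a, i = a + 1 := ⟨i - 1, by omega⟩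
      have := (hiff a j (by omega) (by omega)).mp h3
      refine ⟨a, j, ?_, rfl, rfl⟩
      cases hca : cl a
      · right; exact ⟨⟨by omega, rfl⟩, ⟨by omega, by rw [← this, hca]⟩, by omega⟩
      · left; exact ⟨⟨by omega, rfl⟩, ⟨by omega, by rw [← this, hca]⟩, by omega⟩
  rw [hK] at k3
  have ha : ((Finset.range (n+1)).filter (fun a => c a = true)).card =
      ((Finset.Icc 1 n).filter (fun i => 0 < ∏ k ∈ Finset.Icc 1 i, x k)).card + 1 := by
    have : (Finset.range (n+1)).filter (fun a => c a = true) =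
        insert 0 ((Finset.Icc 1 n).filter (fun i => 0 < ∏ k ∈ Finset.Icc 1 i, x k)) := by
      ext a
      simp only [Finset.mem_filter, Finset.mem_range, Finset.mem_insert, Finset.mem_Icc, c,
        decide_eq_true_eq]
      rcases Nat.eq_zero_or_pos a with rfl | h
      · simp
      · constructor
        · intro h'; right; exact ⟨by omega, h'.2⟩
        · rintro (h' | h')
          · omega
          · exact ⟨by omega, h'.2⟩
    rw [this, Finset.card_insert_of_notMem (by simp)]
  have hb : ((Finset.range (n+1)).filter (fun a => c a = false)) =
      ((Finset.Icc 1 n).filter (fun i => ∏ k ∈ Finset.Icc 1 i, x k < 0)) := by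
    ext a
    simp only [Finset.mem_filter, Finset.mem_range, Finset.mem_Icc, c, decide_eq_false_iff_not]
    rcases Nat.eq_zero_or_pos a with rfl | h
    · simp
    · constructor
      · intro h'
        have h0 : (∏ k ∈ Finset.Icc 1 a, x k) ≠ 0 := by
          rw [Finset.prod_ne_zero_iff]; intro i hi; apply hx0; simp at hi ⊢; omega
        exact ⟨by omega, lt_of_le_of_ne (not_lt.mp h'.2) h0⟩
      · intro h'; exact ⟨by omega, not_lt.mpr h'.2.le⟩
  rw [ha, hb] at k3
  exact k3
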